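/- arXiv:0707.0970 — 4 statements merged into one kernel-verified Lean document; each statement's English description precedes it below -/
import Mathlib

section
/- Let d ≥ 2 and let Γ = F_d be the free group of rank d. Then there exists a chain Γ = Γ_0 ≥ Γ_1 ≥ Γ_2 ≥ … of finite-index subgroups of Γ with ⋂_n Γ_n = {1}, together with a nontrivial element g ∈ Γ and a real number α > 0, such that for every n the fixed-point ratio fixr(g, Γ/Γ_n) > α; in particular fixr(g, Γ/Γ_n) does not tend to 0, so (by the fixed-point-ratio criterion) the boundary representation of Γ with respect to (Γ_n) is not essentially free. -/
/-!
Fix two distinct generators `a` and `b`, take `g = a`, and enumerate the free group as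
`w 0, w 1, …`. The chain is `Γ n = H 0 ⊓ ⋯ ⊓ H (n - 1)`, where `H i = ⊤` if `w i = 1`, and
otherwise `H i` omits `w i`, has prime index larger than the index of `Γ i`, and satisfies
`fixr a (H i) ≥ 1 - 2 ^ (-(i + 2))`.
Omitting every nontrivial element makes the intersection trivial. As the indices are coprime,
fixed-point ratios multiply (`fixr_inf_of_coprime`), so that
`fixr a (Γ n) ≥ 1 - ∑ 2 ^ (-(i + 2)) > 1 / 2`.

The subgroups `H i` come from `exists_prime_index_subgroup`: for every `w ≠ 1` there are transitive
actions on `ZMod p`, for all large primes `p`, in which `b` acts as a `p`-cycle, `a` moves a number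
of points bounded independently of `p`, and `w` moves some point. The input for this is a
finite permutation representation in which `w` acts nontrivially (`exists_hom_perm_ne_one`).
-/

/-- The fixed-point ratio of `g` acting on the coset space `G ⧸ H`. -/
noncomputable def fixr {G : Type*} [Group G] (g : G) (H : Subgroup G) : ℝ :=
  (Nat.card {x : G ⧸ H | g • x = x} : ℝ) / (H.index : ℝ)

namespace FreeGroupBoundary

open MulAction

lemma fixr_stabilizer {G X : Type*} [Group G] [MulAction G X] [IsPretransitive G X]
    (g : G) (x : X) :
    fixr g (stabilizer G x) = (Nat.card (fixedBy X g) : ℝ) / Nat.card X := by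
  have hbij : Function.Bijective (ofQuotientStabilizer G x) := by
    refine ⟨injective_ofQuotientStabilizer G x, fun y => ?_⟩
    obtain ⟨h, rfl⟩ := exists_smul_eq G x y
    exact ⟨(h : G ⧸ stabilizer G x), rfl⟩
  let e := Equiv.ofBijective _ hbij
  have hfix : Nat.card {q : G ⧸ stabilizer G x | g • q = q} = Nat.card (fixedBy X g) := by
    refine Nat.card_congr (e.subtypeEquiv fun q => ?_)
    change g • q = q ↔ g • ofQuotientStabilizer G x q = ofQuotientStabilizer G x q
    rw [← ofQuotientStabilizer_smul, (injective_ofQuotientStabilizer G x).eq_iff]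
  rw [fixr, hfix, Subgroup.index, Nat.card_congr e]

/-- Coprimality of the indices makes the diagonal action on `G ⧸ H × G ⧸ K` transitive, so this
product is the coset space of `H ⊓ K` and the fixed points of `g` multiply. -/
lemma fixr_inf_of_coprime {G : Type*} [Group G] (g : G) (H K : Subgroup G)
    [H.FiniteIndex] [K.FiniteIndex] (hc : Nat.Coprime H.index K.index) :
    fixr g (H ⊓ K) = fixr g H * fixr g K := by
  let x : (G ⧸ H) × (G ⧸ K) := ((1 : G), (1 : G))
  have hstab : stabilizer G x = H ⊓ K := by
    ext u
    rw [mem_stabilizer_iff, Subgroup.mem_inf]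
    change (u • ((1 : G) : G ⧸ H), u • ((1 : G) : G ⧸ K)) =
      (((1 : G) : G ⧸ H), ((1 : G) : G ⧸ K)) ↔ _
    rw [Prod.mk.injEq, ← mem_stabilizer_iff, ← mem_stabilizer_iff, stabilizer_quotient,
      stabilizer_quotient]
  have hindex : H.index * K.index ∣ (H ⊓ K).index :=
    hc.mul_dvd_of_dvd_of_dvd (Subgroup.index_dvd_of_le inf_le_left)
      (Subgroup.index_dvd_of_le inf_le_right)
  have horbit : orbit G x = Set.univ := by
    apply Set.eq_of_subset_of_ncard_le (Set.subset_univ _)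
    rw [← index_stabilizer, hstab, Set.ncard_univ, Nat.card_prod]
    exact Nat.le_of_dvd (Nat.pos_of_ne_zero Subgroup.FiniteIndex.index_ne_zero) hindex
  have : IsPretransitive G ((G ⧸ H) × (G ⧸ K)) :=
    isPretransitive_iff_orbit_eq_univ (a := x) |>.2 horbit
  have hfix : Nat.card (fixedBy ((G ⧸ H) × (G ⧸ K)) g) =
      Nat.card {q : G ⧸ H | g • q = q} * Nat.card {q : G ⧸ K | g • q = q} := by
    rw [← Nat.card_prod]
    refine Nat.card_congr ((Equiv.subtypeEquivRight fun q => ?_).trans Equiv.subtypeProdEquivProd)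
    exact Prod.ext_iff
  rw [← hstab, fixr_stabilizer, hfix, Nat.card_prod, fixr, fixr, Subgroup.index, Subgroup.index]
  push_cast
  rw [mul_div_mul_comm]

lemma fixr_le_one {G : Type*} [Group G] (g : G) (H : Subgroup G) [H.FiniteIndex] :
    fixr g H ≤ 1 := by
  refine div_le_one_of_le₀ ?_ (Nat.cast_nonneg _)
  exact_mod_cast Finite.card_subtype_le _

/-- Residual finiteness of free groups, in permutation form. Let `S` be the finite set of suffixes
of the reduced word of `w`. Left multiplication by a generator is a partial injection of `S`; any
extension of these to permutations of `S` sends `1` to `w` along the successive suffixes. -/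
lemma exists_hom_perm_ne_one {α : Type*} (w : FreeGroup α) (hw : w ≠ 1) :
    ∃ (k : ℕ) (φ : FreeGroup α →* Equiv.Perm (Fin k)), φ w ≠ 1 := by
  classical
  let S : Set (FreeGroup α) := FreeGroup.mk '' {l | l ∈ w.toWord.tails}
  have hS : S.Finite := (List.finite_toSet w.toWord.tails).image _
  have : Fintype S := hS.fintype
  have hmem : ∀ l, l <:+ w.toWord → FreeGroup.mk l ∈ S := fun l hl =>
    ⟨l, (List.mem_tails _ _).2 hl, rfl⟩
  let e (c : α) : {x : S // FreeGroup.of c * x ∈ S} ≃ {x : S // (FreeGroup.of c)⁻¹ * x ∈ S} :=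
    { toFun := fun x => ⟨⟨_, x.2⟩, by simp⟩
      invFun := fun x => ⟨⟨_, x.2⟩, by simp⟩
      left_inv := fun x => by simp
      right_inv := fun x => by simp }
  let φ : FreeGroup α →* Equiv.Perm S := FreeGroup.lift fun c => (e c).extendSubtype
  have hgen (c : α) (x y : S) (h : FreeGroup.of c * (x : FreeGroup α) = y) :
      φ (FreeGroup.of c) x = y := by
    have hx : FreeGroup.of c * (x : FreeGroup α) ∈ S := h ▸ y.2
    simp only [φ, FreeGroup.lift_apply_of]
    rw [Equiv.extendSubtype_apply_of_mem (e c) x hx]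
    exact Subtype.ext h
  have hpath : ∀ l, l <:+ w.toWord →
      (φ (FreeGroup.mk l) ⟨1, hmem [] List.nil_suffix⟩ : FreeGroup α) = FreeGroup.mk l := by
    intro l
    induction l with
    | nil => intro _; rw [← FreeGroup.one_eq_mk, map_one]; rfl
    | cons x l ih =>
      intro hl
      have hl' : l <:+ w.toWord := (List.suffix_cons x l).trans hl
      obtain ⟨c, β⟩ := x
      have hcons : FreeGroup.mk ((c, β) :: l) = FreeGroup.mk [(c, β)] * FreeGroup.mk l := by
        rw [FreeGroup.mul_mk]; rfl
      have hy : φ (FreeGroup.mk l) ⟨1, hmem [] List.nil_suffix⟩ =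
          ⟨FreeGroup.mk l, hmem l hl'⟩ := Subtype.ext (ih hl')
      have hz : φ (FreeGroup.mk [(c, β)]) ⟨FreeGroup.mk l, hmem l hl'⟩ =
          ⟨FreeGroup.mk ((c, β) :: l), hmem _ hl⟩ := by
        cases β
        · have hinv : FreeGroup.mk [(c, false)] = (FreeGroup.of c)⁻¹ := rfl
          rw [hinv, map_inv, Equiv.Perm.inv_eq_iff_eq]
          refine (hgen _ _ _ ?_).symm
          change FreeGroup.of c * FreeGroup.mk ((c, false) :: l) = FreeGroup.mk l
          rw [hcons, hinv, mul_inv_cancel_left]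
        · exact hgen _ _ _ hcons.symm
      rw [hcons, map_mul, Equiv.Perm.mul_apply, hy, hz]
      exact hcons
  have hφ : φ w ≠ 1 := by
    intro h
    have hend := hpath w.toWord List.suffix_rfl
    rw [FreeGroup.mk_toWord, h] at hend
    exact hw hend.symm
  refine ⟨Fintype.card S, (Fintype.equivFin S).permCongrHom.toMonoidHom.comp φ, fun h => hφ ?_⟩
  exact (MulEquiv.map_eq_one_iff (Fintype.equivFin S).permCongrHom).1 h

/-- The key construction: a transitive action on `ZMod p`, with `p` a large prime, in which `b` is
the cycle `x ↦ x + 1`, every other generator moves only boundedly many points (independently of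
`p`), and `w` moves some point; `H` is the stabilizer of that point.

Given `φ : FreeGroup α →* Perm (Fin k)` with `φ w ≠ 1` and `L` the length of `w`, cut
`[0, M * k)`, `M = 2 * L + 1`, into `k` blocks of length `M`, so that a pair `(r, y)` stands for
`r + M * y`. A generator `c ≠ b` acts by `(r, y) ↦ (r, φ (b ^ (-r) * c * b ^ r) y)`. Along the
suffixes `u` of `w`, the trajectory of `(L, y)` stays in the range `0 ≤ r < M` and equals
`(L + s, φ (b ^ (-(L + s)) * u * b ^ L) y)`, with `s` the exponent sum of `b` in `u`. Returning to
`(L, y)` at `u = w` forces `s = 0`, hence `φ (b ^ (-L) * w * b ^ L)` fixes `y`; this fails for a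
suitable `y`. -/
lemma exists_prime_index_subgroup {α : Type*} {a b : α} (hab : a ≠ b) (w : FreeGroup α)
    (hw : w ≠ 1) (N : ℕ) {ε : ℝ} (hε : 0 < ε) :
    ∃ H : Subgroup (FreeGroup α), H.index.Prime ∧ N < H.index ∧ w ∉ H ∧
      1 - ε ≤ fixr (FreeGroup.of a) H := by
  classical
  obtain ⟨k, φ, hφ⟩ := exists_hom_perm_ne_one w hw
  let L : ℕ := w.toWord.length
  let M : ℕ := 2 * L + 1
  obtain ⟨p, hpN, hp⟩ := Nat.exists_infinite_primes (N + M * k + ⌈(M * k : ℕ) / ε⌉₊ + 1)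
  have : Fact p.Prime := ⟨hp⟩
  let B : FreeGroup α := FreeGroup.of b
  -- The point `(r, y)`; this is injective only for `0 ≤ r < M`, but is used for all `r : ℤ`.
  let J (r : ℤ) (y : Fin k) : ZMod p := ((r + M * (y : ℕ) : ℤ) : ZMod p)
  have hJ : ∀ r r' : ℤ, ∀ y y' : Fin k, 0 ≤ r → r < M → 0 ≤ r' → r' < M →
      J r y = J r' y' → r = r' ∧ y = y' := by
    intro r r' y y' h0 hM h0' hM' h
    have hbound : ∀ (r : ℤ) (y : Fin k), 0 ≤ r → r < M →
        0 ≤ r + M * (y : ℕ) ∧ r + M * (y : ℕ) < p := by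
      intro r y h0 hM
      refine ⟨by positivity, ?_⟩
      have hy : ((y : ℕ) : ℤ) + 1 ≤ k := by exact_mod_cast y.2
      have hMk : (M : ℤ) * k < p := by
        have : M * k < p := by lia
        exact_mod_cast this
      nlinarith
    have hb := hbound r y h0 hM
    have hb' := hbound r' y' h0' hM'
    have heq : r + M * (y : ℕ) = r' + M * (y' : ℕ) := by
      have h1 := (ZMod.intCast_eq_intCast_iff _ _ _).1 h
      rwa [Int.ModEq, Int.emod_eq_of_lt hb.1 hb.2, Int.emod_eq_of_lt hb'.1 hb'.2] at h1
    have hr : r = r' := by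
      have h1 := congrArg (· % (M : ℤ)) heq
      simpa [Int.emod_eq_of_lt h0 hM, Int.emod_eq_of_lt h0' hM'] using h1
    have hM0 : (M : ℤ) ≠ 0 := by positivity
    refine ⟨hr, Fin.ext ?_⟩
    subst hr
    have h2 := mul_left_cancel₀ hM0 (add_left_cancel heq)
    exact_mod_cast h2
  let ι : Fin M × Fin k ↪ ZMod p :=
    ⟨fun q => J (q.1 : ℕ) q.2, fun q q' h => by
      have h1 := hJ _ _ _ _ (by positivity) (by exact_mod_cast q.1.2) (by positivity)
        (by exact_mod_cast q'.1.2) h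
      exact Prod.ext (Fin.ext (by exact_mod_cast h1.1)) h1.2⟩
  let τ (c : α) : Equiv.Perm (Fin M × Fin k) :=
    Equiv.prodCongrRight fun r => φ (B ^ (-((r : ℕ) : ℤ)) * FreeGroup.of c * B ^ ((r : ℕ) : ℤ))
  let ψ : FreeGroup α →* Equiv.Perm (ZMod p) := FreeGroup.lift fun c =>
    if c = b then Equiv.addRight 1 else (τ c).viaEmbedding ι
  have hψb (x : ZMod p) : ψ B x = x + 1 := by
    simp [ψ, B, FreeGroup.lift_apply_of]
  have hψ (c : α) (hc : c ≠ b) : ψ (FreeGroup.of c) = (τ c).viaEmbedding ι := by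
    simp [ψ, FreeGroup.lift_apply_of, hc]
  have hψc (c : α) (hc : c ≠ b) (r : ℤ) (h0 : 0 ≤ r) (hM : r < M) (y : Fin k) :
      ψ (FreeGroup.of c) (J r y) = J r (φ (B ^ (-r) * FreeGroup.of c * B ^ r) y) := by
    lift r to ℕ using h0
    rw [hψ c hc]
    exact (τ c).viaEmbedding_apply ι (⟨r, by exact_mod_cast hM⟩, y)
  have hJ1 (r : ℤ) (y : Fin k) : J r y + 1 = J (r + 1) y := by
    simp only [J]; push_cast; ring
  -- `s` is the exponent of `b` in the letter `x`: `1`, `-1` or `0`.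
  have hletter (x : α × Bool) : ∃ s : ℤ, |s| ≤ 1 ∧ ∀ (r : ℤ), 0 ≤ r → r < M → ∀ y : Fin k,
      ψ (FreeGroup.mk [x]) (J r y) =
        J (r + s) (φ (B ^ (-(r + s)) * FreeGroup.mk [x] * B ^ r) y) := by
    obtain ⟨c, β⟩ := x
    have hinv : FreeGroup.mk [(c, false)] = (FreeGroup.of c)⁻¹ := rfl
    have hof : FreeGroup.mk [(c, true)] = FreeGroup.of c := rfl
    by_cases hc : c = b
    · subst hc
      cases β
      · refine ⟨-1, by simp, fun r _ _ y => ?_⟩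
        rw [hinv, map_inv, Equiv.Perm.inv_eq_iff_eq, hψb, hJ1]
        have : B ^ (-(r + -1)) * (FreeGroup.of c)⁻¹ * B ^ r = 1 := by
          change B ^ (-(r + -1)) * B⁻¹ * B ^ r = 1
          group
        rw [this, map_one]
        simp
      · refine ⟨1, by simp, fun r _ _ y => ?_⟩
        rw [hof, hψb, hJ1]
        have : B ^ (-(r + 1)) * FreeGroup.of c * B ^ r = 1 := by
          change B ^ (-(r + 1)) * B * B ^ r = 1
          group
        rw [this, map_one]
        simp
    · refine ⟨0, by simp, fun r h0 hM y => ?_⟩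
      rw [add_zero]
      cases β
      · rw [hinv, map_inv, Equiv.Perm.inv_eq_iff_eq, hψc c hc r h0 hM,
          ← Equiv.Perm.mul_apply, ← map_mul]
        have : B ^ (-r) * FreeGroup.of c * B ^ r * (B ^ (-r) * (FreeGroup.of c)⁻¹ * B ^ r) = 1 := by
          group
        rw [this, map_one]
        simp
      · exact hψc c hc r h0 hM y
  have hword : ∀ l : List (α × Bool), l.length ≤ L → ∃ s : ℤ, |s| ≤ l.length ∧ ∀ y : Fin k,
      ψ (FreeGroup.mk l) (J L y) =
        J (L + s) (φ (B ^ (-(L + s)) * FreeGroup.mk l * B ^ (L : ℤ)) y) := by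
    intro l
    induction l with
    | nil =>
      refine fun _ => ⟨0, by simp, fun y => ?_⟩
      rw [← FreeGroup.one_eq_mk]
      simp
    | cons x l ih =>
      intro hl
      rw [List.length_cons] at hl
      obtain ⟨s, hs, hsy⟩ := ih (by lia)
      obtain ⟨t, ht, hty⟩ := hletter x
      have hcons : FreeGroup.mk (x :: l) = FreeGroup.mk [x] * FreeGroup.mk l := by
        rw [FreeGroup.mul_mk]; rfl
      have hsL : |s| < L := lt_of_le_of_lt hs (by exact_mod_cast hl)
      rw [abs_lt] at hsL
      refine ⟨s + t, ?_, fun y => ?_⟩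
      · rw [List.length_cons]
        push_cast
        exact (abs_add_le s t).trans (add_le_add hs ht)
      · rw [hcons, map_mul, Equiv.Perm.mul_apply, hsy,
          hty _ (by lia) (by simp only [M]; push_cast; lia),
          ← Equiv.Perm.mul_apply, ← map_mul, add_assoc]
        congr 3
        group
  obtain ⟨s, hs, hsy⟩ := hword w.toWord le_rfl
  rw [FreeGroup.mk_toWord] at hsy
  have hconj : φ (B ^ (-(L : ℤ)) * w * B ^ (L : ℤ)) ≠ 1 := by
    intro h
    apply hφ
    rw [map_mul, map_mul, zpow_neg, map_inv] at h
    have h1 := congrArg (fun u => φ (B ^ (L : ℤ)) * u * (φ (B ^ (L : ℤ)))⁻¹) h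
    simpa [mul_assoc] using h1
  obtain ⟨y, hy⟩ : ∃ y, φ (B ^ (-(L : ℤ)) * w * B ^ (L : ℤ)) y ≠ y := by
    by_contra! h
    exact hconj (Equiv.ext h)
  have hmove : ψ w (J L y) ≠ J L y := by
    intro h
    rw [hsy] at h
    have hs' := abs_le.1 hs
    have hLdef : w.toWord.length = L := rfl
    rw [hLdef] at hs'
    obtain ⟨h1, h2⟩ := hJ _ _ _ _ (by lia) (by simp only [M]; push_cast; lia) (by lia)
      (by simp only [M]; push_cast; lia) h
    rw [h1] at h2
    exact hy h2
  let act : MulAction (FreeGroup α) (ZMod p) := MulAction.compHom (ZMod p) ψ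
  have hsmul (u : FreeGroup α) (x : ZMod p) : u • x = ψ u x := rfl
  have hpow (n : ℕ) (x : ZMod p) : B ^ n • x = x + n := by
    induction n with
    | zero => simp
    | succ n ih => rw [pow_succ', mul_smul, ih, hsmul, hψb]; push_cast; ring
  have htrans : IsPretransitive (FreeGroup α) (ZMod p) :=
    ⟨fun x z => ⟨B ^ (z - x).val, by rw [hpow]; simp⟩⟩
  have hindex : (stabilizer (FreeGroup α) (J L y)).index = p := by
    rw [index_stabilizer_of_transitive, Nat.card_zmod]
  refine ⟨stabilizer (FreeGroup α) (J L y), by rwa [hindex], by rw [hindex]; lia, hmove, ?_⟩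
  rw [fixr_stabilizer, Nat.card_zmod]
  have hcard : p ≤ Nat.card (fixedBy (ZMod p) (FreeGroup.of a)) + M * k := by
    have hcover : (Set.univ : Set (ZMod p)) ⊆ fixedBy (ZMod p) (FreeGroup.of a) ∪ Set.range ι := by
      intro x _
      by_cases hx : x ∈ Set.range ι
      · exact Or.inr hx
      · left
        rw [mem_fixedBy, hsmul, hψ a hab]
        exact Equiv.Perm.viaEmbedding_apply_of_notMem _ _ _ hx
    have h1 := (Set.ncard_le_ncard hcover).trans (Set.ncard_union_le _ _)
    have h2 : (Set.range ι).ncard = M * k := by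
      rw [← Set.image_univ, Set.ncard_image_of_injective _ ι.injective, Set.ncard_univ]
      simp
    rw [Set.ncard_univ, Nat.card_zmod, h2] at h1
    exact h1
  have hp0 : (0 : ℝ) < p := by exact_mod_cast hp.pos
  have hceil : ((M * k : ℕ) : ℝ) ≤ ε * p := by
    have h1 : ((M * k : ℕ) : ℝ) / ε ≤ p :=
      (Nat.le_ceil _).trans (by exact_mod_cast (by lia))
    rw [div_le_iff₀ hε] at h1
    linarith
  have hcard' : (p : ℝ) ≤ Nat.card (fixedBy (ZMod p) (FreeGroup.of a)) + (M * k : ℕ) := by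
    exact_mod_cast hcard
  rw [le_div_iff₀ hp0]
  linarith

/-- One step of the chain: `K` is shrunk so as to omit `w`, at the cost of at most `ε` in the
fixed-point ratio. -/
lemma exists_step {α : Type*} {a b : α} (hab : a ≠ b) (w : FreeGroup α)
    (K : Subgroup (FreeGroup α)) (hK : K.FiniteIndex) {ε : ℝ} (hε : 0 < ε) :
    ∃ H : Subgroup (FreeGroup α), H.FiniteIndex ∧ H ≤ K ∧ (w ≠ 1 → w ∉ H) ∧
      fixr (FreeGroup.of a) K - ε ≤ fixr (FreeGroup.of a) H := by
  by_cases hw : w = 1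
  · exact ⟨K, hK, le_rfl, fun h => absurd hw h, by linarith⟩
  obtain ⟨H, hprime, hlt, hwH, hfix⟩ := exists_prime_index_subgroup hab w hw K.index hε
  have hH : H.FiniteIndex := ⟨hprime.ne_zero⟩
  have hcop : Nat.Coprime K.index H.index :=
    (Nat.coprime_of_lt_prime hK.index_ne_zero hlt hprime).symm
  refine ⟨K ⊓ H, inferInstance, inf_le_left, fun _ h => hwH h.2, ?_⟩
  rw [fixr_inf_of_coprime _ _ _ hcop]
  have h0 : 0 ≤ fixr (FreeGroup.of a) K := div_nonneg (Nat.cast_nonneg _) (Nat.cast_nonneg _)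
  have h1 := fixr_le_one (FreeGroup.of a) K
  nlinarith

end FreeGroupBoundary

/-- For every `d ≥ 2` there is a chain of finite-index subgroups of the free group of
rank `d` with trivial intersection, a nontrivial element `g`, and `α > 0` such that the
fixed-point ratio of `g` on every coset space of the chain exceeds `α`; in particular the
fixed-point ratios do not tend to `0`, so the boundary representation with respect to the
chain is not essentially free. -/
theorem free_group_admits_non_essentially_free_boundary_action (d : ℕ) (hd : 2 ≤ d) :
    ∃ Γ : ℕ → Subgroup (FreeGroup (Fin d)),
      Γ 0 = ⊤ ∧
      (∀ n, Γ (n + 1) ≤ Γ n) ∧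
      (∀ n, (Γ n).FiniteIndex) ∧
      (⨅ n, Γ n) = ⊥ ∧
      ∃ g : FreeGroup (Fin d), g ≠ 1 ∧
        ∃ α : ℝ, 0 < α ∧ (∀ n, α < fixr g (Γ n)) ∧
          ¬ Filter.Tendsto (fun n => fixr g (Γ n)) Filter.atTop (nhds 0) := by
  have hab : (⟨1, by lia⟩ : Fin d) ≠ ⟨0, by lia⟩ := by simp
  obtain ⟨w, hw⟩ := exists_surjective_nat (FreeGroup (Fin d))
  choose f hfin hle hnot hfix using fun (n : ℕ) (K : {K : Subgroup (FreeGroup (Fin d)) //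
    K.FiniteIndex}) => FreeGroupBoundary.exists_step hab (w n) K.1 K.2
      (ε := (1 / 2) ^ (n + 2)) (by positivity)
  -- The losses `(1 / 2) ^ (n + 2)` sum to `1 / 2`, so the ratio, initially `1`, stays above `1 / 2`.
  let Δ : ℕ → {K : Subgroup (FreeGroup (Fin d)) // K.FiniteIndex} := fun n =>
    Nat.rec ⟨⊤, inferInstance⟩ (fun n K => ⟨f n K, hfin n K⟩) n
  have hΔ (n : ℕ) : (Δ (n + 1)).1 = f n (Δ n) := rfl
  have htop : (Δ 0).1 = ⊤ := rfl
  have hratio : ∀ n, 1 / 2 + (1 / 2 : ℝ) ^ (n + 1) ≤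
      fixr (FreeGroup.of (⟨1, by lia⟩ : Fin d)) (Δ n).1 := by
    intro n
    induction n with
    | zero =>
      rw [htop, fixr]
      have := QuotientGroup.subsingleton_quotient_top (G := FreeGroup (Fin d))
      have : Nat.card {x : FreeGroup (Fin d) ⧸ (⊤ : Subgroup (FreeGroup (Fin d))) |
          FreeGroup.of (⟨1, by lia⟩ : Fin d) • x = x} = 1 := by
        rw [Nat.card_eq_one_iff_unique]
        exact ⟨⟨fun x y => Subtype.ext (Subsingleton.elim _ _)⟩,
          ⟨⟨(1 : FreeGroup (Fin d)), Subsingleton.elim _ _⟩⟩⟩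
      rw [this, Subgroup.index_top]
      norm_num
    | succ n ih =>
      rw [hΔ]
      refine le_trans ?_ (hfix n (Δ n))
      have : (1 / 2 : ℝ) ^ (n + 1) = (1 / 2) ^ (n + 2) + (1 / 2) ^ (n + 2) := by ring
      linarith
  have hlt : ∀ n, (1 / 2 : ℝ) < fixr (FreeGroup.of (⟨1, by lia⟩ : Fin d)) (Δ n).1 := fun n =>
    (lt_add_of_pos_right _ (by positivity)).trans_le (hratio n)
  refine ⟨fun n => (Δ n).1, htop, fun n => hle n (Δ n), fun n => (Δ n).2, ?_,
    FreeGroup.of ⟨1, by lia⟩, FreeGroup.of_ne_one _, 1 / 2, by norm_num, hlt, fun h => ?_⟩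
  · rw [Subgroup.eq_bot_iff_forall]
    intro x hx
    by_contra hne
    obtain ⟨n, rfl⟩ := hw x
    exact hnot n (Δ n) hne (Subgroup.mem_iInf.1 hx (n + 1))
  · have := ge_of_tendsto' h fun n => (hlt n).le
    norm_num at this
end

section
/- Let d ≥ 2, let Γ = F_d be the free group of rank d, and let 0 < α < 1. Then there exists a chain Γ = Γ_0 ≥ Γ_1 ≥ Γ_2 ≥ … of finite-index subgroups of Γ with ⋂_n Γ_n = {1} and a free generator a of Γ such that fixr(a, Γ/Γ_n) > α for all n ≥ 1. -/
/-- The proportion of points of `G ⧸ H` that are moved by `g`. -/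
noncomputable def movr {G : Type*} [Group G] (g : G) (H : Subgroup G) : ℝ :=
  (Nat.card {x : G ⧸ H | g • x ≠ x} : ℝ) / (H.index : ℝ)

lemma fixr_eq_one_sub_movr {G : Type*} [Group G] (g : G) (H : Subgroup G) [H.FiniteIndex] :
    fixr g H = 1 - movr g H := by
  have h0 : (H.index : ℝ) ≠ 0 := by exact_mod_cast Subgroup.FiniteIndex.index_ne_zero
  have h := Set.ncard_add_ncard_compl {x : G ⧸ H | g • x = x}
  have h' : (Nat.card {x : G ⧸ H | g • x = x} : ℝ) + Nat.card {x : G ⧸ H | g • x ≠ x}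
      = H.index := by
    exact_mod_cast h
  unfold fixr movr
  field_simp
  linarith

/-- The projection `G ⧸ C → G ⧸ A` has fibres of constant size, so it preserves proportions. -/
lemma card_preimage_div_index {G : Type*} [Group G] {C A : Subgroup G} (h : C ≤ A)
    [C.FiniteIndex] (S : Set (G ⧸ A)) :
    (Nat.card (Subgroup.quotientMapOfLE h ⁻¹' S) : ℝ) / C.index = Nat.card S / A.index := by
  have e : (Subgroup.quotientMapOfLE h ⁻¹' S) ≃ S × (A ⧸ C.subgroupOf A) :=
    ((Subgroup.quotientEquivProdOfLE h).subtypeEquiv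
      (p := fun x => x ∈ Subgroup.quotientMapOfLE h ⁻¹' S) (q := fun y => y.1 ∈ S)
      (fun x => Iff.rfl)).trans
      { toFun := fun y => (⟨y.1.1, y.2⟩, y.1.2)
        invFun := fun y => ⟨(y.1.1, y.2), y.1.2⟩
        left_inv := fun _ => rfl
        right_inv := fun _ => rfl }
  have h1 : Nat.card (Subgroup.quotientMapOfLE h ⁻¹' S) = Nat.card S * C.relIndex A := by
    rw [Nat.card_congr e, Nat.card_prod]; rfl
  have h2 := Subgroup.relIndex_mul_index h
  have hC : C.index ≠ 0 := Subgroup.FiniteIndex.index_ne_zero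
  have hr : (C.relIndex A : ℝ) ≠ 0 := by
    intro h0
    rw [Nat.cast_eq_zero] at h0
    rw [h0, zero_mul] at h2
    exact hC h2.symm
  rw [h1, ← h2, Nat.cast_mul, Nat.cast_mul, mul_comm (C.relIndex A : ℝ)]
  exact mul_div_mul_right _ _ hr

lemma movr_inf_le {G : Type*} [Group G] (g : G) (A B : Subgroup G)
    [A.FiniteIndex] [B.FiniteIndex] : movr g (A ⊓ B) ≤ movr g A + movr g B := by
  have hA := card_preimage_div_index (inf_le_left : A ⊓ B ≤ A) {x | g • x ≠ x}
  have hB := card_preimage_div_index (inf_le_right : A ⊓ B ≤ B) {x | g • x ≠ x}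
  unfold movr
  rw [← hA, ← hB, ← add_div]
  gcongr
  have hsub : {x : G ⧸ (A ⊓ B) | g • x ≠ x} ⊆
      Subgroup.quotientMapOfLE (inf_le_left : A ⊓ B ≤ A) ⁻¹' {x | g • x ≠ x} ∪
      Subgroup.quotientMapOfLE (inf_le_right : A ⊓ B ≤ B) ⁻¹' {x | g • x ≠ x} := by
    intro x
    induction x using QuotientGroup.induction_on with
    | H z =>
      simp only [Set.mem_ofPred_eq, Set.mem_union, Set.mem_preimage,
        Subgroup.quotientMapOfLE_apply_mk, MulAction.Quotient.smul_mk, ne_eq, QuotientGroup.eq,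
        Subgroup.mem_inf]
      tauto
  exact_mod_cast (Set.ncard_le_ncard hsub (Set.toFinite _)).trans (Set.ncard_union_le _ _)

lemma movr_top {G : Type*} [Group G] (g : G) : movr g (⊤ : Subgroup G) = 0 := by
  have : {x : G ⧸ (⊤ : Subgroup G) | g • x ≠ x} = ∅ := by
    ext x
    induction x using QuotientGroup.induction_on with
    | H z => simp [QuotientGroup.eq]
  simp [movr, this]

lemma movr_stabilizer {G X : Type*} [Group G] [MulAction G X]
    [MulAction.IsPretransitive G X] (g : G) (x₀ : X) :
    movr g (MulAction.stabilizer G x₀) = Nat.card {x : X | g • x ≠ x} / Nat.card X := by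
  have hbij : Function.Bijective (MulAction.ofQuotientStabilizer G x₀) := by
    refine ⟨MulAction.injective_ofQuotientStabilizer G x₀, fun x => ?_⟩
    obtain ⟨h, rfl⟩ := MulAction.exists_smul_eq G x₀ x
    exact ⟨QuotientGroup.mk h, MulAction.ofQuotientStabilizer_mk G x₀ h⟩
  unfold movr
  rw [MulAction.index_stabilizer_of_transitive]
  congr 2
  refine Nat.card_congr ((Equiv.ofBijective _ hbij).subtypeEquiv fun y => ?_)
  simp only [Set.mem_ofPred_eq, Equiv.ofBijective_apply]
  rw [← MulAction.ofQuotientStabilizer_smul, hbij.1.ne_iff]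

/-- A partial injection of a finite type, given by its graph, extends to a permutation. -/
lemma exists_perm_of_partial_injection {X : Type*} [Finite X] (R : X → X → Prop)
    (h1 : ∀ x y z, R x y → R x z → y = z) (h2 : ∀ x y z, R x z → R y z → x = y) :
    ∃ e : Equiv.Perm X, ∀ x y, R x y → e x = y := by
  classical
  let f : {x // ∃ y, R x y} → {y // ∃ x, R x y} := fun x => ⟨x.2.choose, x.1, x.2.choose_spec⟩
  have hf : Function.Bijective f := by
    constructor
    · intro x y hxy
      have hxy' : x.2.choose = y.2.choose := congrArg Subtype.val hxy
      exact Subtype.ext (h2 _ _ _ x.2.choose_spec (hxy' ▸ y.2.choose_spec))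
    · rintro ⟨y, x, hxy⟩
      have hx : ∃ y, R x y := ⟨y, hxy⟩
      exact ⟨⟨x, hx⟩, Subtype.ext (h1 _ _ _ hx.choose_spec hxy)⟩
  refine ⟨(Equiv.ofBijective f hf).extendSubtype, fun x y hxy => ?_⟩
  have hx : ∃ y, R x y := ⟨y, hxy⟩
  rw [Equiv.extendSubtype_apply_of_mem _ x hx]
  exact h1 _ _ _ hx.choose_spec hxy

/-- The partial injection of the path `0, …, N` given by the generator `s` when a word `L` of length
`N` is laid along it: the letter at position `j` carries the vertex `j + 1` to the vertex `j`.
The generator `a` fixes in addition all vertices beyond `l`. -/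
def PathRel {S : Type*} (L : List (S × Bool)) (a : S) (l : ℕ) (s : S) (i j : ℕ) : Prop :=
  (i = j + 1 ∧ L[j]? = some (s, true)) ∨ (j = i + 1 ∧ L[i]? = some (s, false)) ∨
    (s = a ∧ i = j ∧ l < i)

lemma reduced_getElem {S : Type*} {L : List (S × Bool)} (hL : FreeGroup.IsReduced L) (i : ℕ)
    {s : S} {p q : Bool} (h1 : L[i]? = some (s, p)) (h2 : L[i + 1]? = some (s, q)) : p = q := by
  obtain ⟨hi, e1⟩ := List.getElem?_eq_some_iff.1 h1
  obtain ⟨hi', e2⟩ := List.getElem?_eq_some_iff.1 h2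
  have := List.isChain_iff_getElem.1 hL i hi'
  rw [e1, e2] at this
  exact this rfl

/-- If the letters of the reduced word `L` from position `l` on differ from `a^±1`, the relations
`PathRel` extend to permutations of the vertices. -/
lemma exists_path_perm {S : Type*} {L : List (S × Bool)} (hL : FreeGroup.IsReduced L)
    (a : S) (l : ℕ) (ha : ∀ i p, l ≤ i → L[i]? ≠ some (a, p)) (s : S) :
    ∃ e : Equiv.Perm (Fin (L.length + 1)), ∀ x y : Fin (L.length + 1),
      PathRel L a l s x y → e x = y := by
  have hr := fun i p q => reduced_getElem (p := p) (q := q) (s := s) hL i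
  apply exists_perm_of_partial_injection
  · rintro x y z (⟨h1, h2⟩ | ⟨h1, h2⟩ | ⟨h1, h2, h3⟩) (⟨k1, k2⟩ | ⟨k1, k2⟩ | ⟨k1, k2, k3⟩) <;>
      apply Fin.ext
    · omega
    · rw [h1] at k2; exact absurd (hr _ _ _ h2 k2) (by simp)
    · subst k1; exact absurd h2 (ha _ _ (by omega))
    · rw [k1] at h2; exact absurd (hr _ _ _ k2 h2) (by simp)
    · omega
    · subst k1; exact absurd h2 (ha _ _ (by omega))
    · subst h1; exact absurd k2 (ha _ _ (by omega))
    · subst h1; exact absurd k2 (ha _ _ (by omega))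
    · omega
  · rintro x y z (⟨h1, h2⟩ | ⟨h1, h2⟩ | ⟨h1, h2, h3⟩) (⟨k1, k2⟩ | ⟨k1, k2⟩ | ⟨k1, k2, k3⟩) <;>
      apply Fin.ext
    · omega
    · rw [k1] at h2; exact absurd (hr _ _ _ k2 h2) (by simp)
    · subst k1; exact absurd h2 (ha _ _ (by omega))
    · rw [h1] at k2; exact absurd (hr _ _ _ h2 k2) (by simp)
    · omega
    · subst k1; exact absurd h2 (ha _ _ (by omega))
    · subst h1; exact absurd k2 (ha _ _ (by omega))
    · subst h1; exact absurd k2 (ha _ _ (by omega))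
    · omega

/-- The prefix of `L` of length `i` carries the vertex `i` to the vertex `0`. -/
lemma path_prefix {S : Type*} (L : List (S × Bool)) (a : S) (l : ℕ)
    (e : S → Equiv.Perm (Fin (L.length + 1)))
    (he : ∀ s (x y : Fin (L.length + 1)), PathRel L a l s x y → e s x = y) (i : ℕ) (hi : i < L.length + 1) :
    FreeGroup.lift e (FreeGroup.mk (L.take i)) ⟨i, hi⟩ = 0 := by
  induction i with
  | zero => simp
  | succ i ih =>
    have hi' : i < L.length := by omega
    rw [← List.take_append_getElem hi', ← FreeGroup.mul_mk, map_mul, Equiv.Perm.mul_apply]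
    convert ih (by omega)
    have hget : L[i]? = some L[i] := List.getElem?_eq_getElem hi'
    rcases hx : L[i] with ⟨s, p⟩
    rw [hx] at hget
    cases p
    · -- an inverse letter: the generator itself carries `i` to `i + 1`
      have := he s ⟨i, by omega⟩ ⟨i + 1, hi⟩ (Or.inr (Or.inl ⟨rfl, hget⟩))
      simp [← this]
    · have := he s ⟨i + 1, hi⟩ ⟨i, by omega⟩ (Or.inl ⟨rfl, hget⟩)
      simp [this]

lemma exists_subgroup_movr_le {S : Type*} (a b : S) (hab : a ≠ b) (w : FreeGroup S)
    (ε : ℝ) (hε : 0 < ε) :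
    ∃ H : Subgroup (FreeGroup S), H.FiniteIndex ∧ (w ∈ H → w = 1) ∧
      movr (FreeGroup.of a) H ≤ ε := by
  classical
  by_cases hw : w = 1
  · exact ⟨⊤, inferInstance, fun _ => hw, by rw [movr_top]; exact hε.le⟩
  set W := w.toWord with hW
  have hWne : W ≠ [] := by simpa [hW] using hw
  obtain ⟨M, hM⟩ := exists_nat_ge ((W.length + 1) / ε)
  -- prolonging by `b` with the sign of the last letter of `W` keeps the word reduced
  set L := W ++ List.replicate M (b, (W.getLast hWne).2) with hLdef
  have hL : FreeGroup.IsReduced L := by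
    refine List.IsChain.append FreeGroup.isReduced_toWord
      (List.isChain_replicate_of_rel _ fun _ => rfl) ?_
    intro x hx y hy _
    rw [List.getLast?_eq_some_getLast hWne] at hx
    have hy' := List.eq_of_mem_replicate (List.mem_of_mem_head? hy)
    simp only [Option.mem_def, Option.some.injEq] at hx
    rw [hy', ← hx]
  have hlen : L.length = W.length + M := by simp [hLdef]
  have ha : ∀ i p, W.length ≤ i → L[i]? ≠ some (a, p) := by
    intro i p hi h
    rw [hLdef, List.getElem?_append_right hi] at h
    have := List.eq_of_mem_replicate (List.mem_of_getElem? h)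
    exact hab (congrArg Prod.fst this)
  choose e he using exists_path_perm hL a W.length ha
  have hpre := path_prefix L a W.length e he
  let : MulAction (FreeGroup S) (Fin (L.length + 1)) :=
    MulAction.compHom _ (FreeGroup.lift e)
  have hsmul : ∀ (g : FreeGroup S) (x : Fin (L.length + 1)), g • x = FreeGroup.lift e g x :=
    fun _ _ => rfl
  have : MulAction.IsPretransitive (FreeGroup S) (Fin (L.length + 1)) := by
    refine (MulAction.isPretransitive_iff_base (0 : Fin (L.length + 1))).2 fun x => ?_
    refine ⟨(FreeGroup.mk (L.take x))⁻¹, ?_⟩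
    rw [inv_smul_eq_iff, hsmul]
    exact (hpre x x.2).symm
  refine ⟨MulAction.stabilizer _ (0 : Fin (L.length + 1)), ⟨?_⟩, ?_, ?_⟩
  · rw [MulAction.index_stabilizer_of_transitive]
    simp
  · intro hmem
    exfalso
    have h1 : w • (⟨W.length, by omega⟩ : Fin (L.length + 1)) = 0 := by
      have := hpre W.length (by omega)
      have htake : L.take W.length = W := List.take_left
      have hmk : FreeGroup.mk W = w := FreeGroup.mk_toWord
      rwa [htake, hmk] at this
    have h2 : w • (0 : Fin (L.length + 1)) = 0 := hmem
    have h3 := congrArg Fin.val (smul_left_cancel w (h1.trans h2.symm))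
    exact hWne (List.length_eq_zero_iff.1 h3)
  · rw [movr_stabilizer]
    have hsub : {x : Fin (L.length + 1) | FreeGroup.of a • x ≠ x} ⊆
        Fin.val ⁻¹' (Set.Iio (W.length + 1)) := by
      intro x hx
      by_contra hlt
      simp only [Set.mem_preimage, Set.mem_Iio, not_lt] at hlt
      refine hx ?_
      rw [hsmul, FreeGroup.lift_apply_of]
      exact he a x x (Or.inr (Or.inr ⟨rfl, rfl, hlt⟩))
    have hcard : Nat.card {x : Fin (L.length + 1) | FreeGroup.of a • x ≠ x} ≤ W.length + 1 := by
      have h1 := Set.ncard_le_ncard hsub (Set.toFinite _)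
      have h2 : (Fin.val ⁻¹' (Set.Iio (W.length + 1)) : Set (Fin (L.length + 1))).ncard
          ≤ (Set.Iio (W.length + 1)).ncard :=
        Set.ncard_le_ncard_of_injOn Fin.val (fun _ h => h) Fin.val_injective.injOn
          (Set.finite_Iio _)
      have h3 : (Set.Iio (W.length + 1)).ncard = W.length + 1 := by
        rw [← Finset.coe_Iio, Set.ncard_coe_finset, Nat.card_Iio]
      exact (h1.trans h2).trans h3.le
    have hcard' : (Nat.card {x : Fin (L.length + 1) | FreeGroup.of a • x ≠ x} : ℝ)
        ≤ W.length + 1 := by exact_mod_cast hcard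
    rw [Nat.card_fin, div_le_iff₀ (by positivity)]
    rw [div_le_iff₀ hε] at hM
    have hlen' : (L.length : ℝ) = W.length + M := by exact_mod_cast hlen
    push_cast
    rw [hlen']
    have : 0 ≤ ε * (W.length + 1) := by positivity
    linarith

/-- For every `d ≥ 2` and `0 < α < 1` there is a chain of finite-index subgroups of the
free group of rank `d` with trivial intersection and a free generator `a` such that the
fixed-point ratio of `a` on every coset space `Γ ⧸ Γ_n` (`n ≥ 1`) exceeds `α`. -/
theorem free_group_chain_with_large_fixed_point_ratio (d : ℕ) (hd : 2 ≤ d)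
    (α : ℝ) (hα0 : 0 < α) (hα1 : α < 1) :
    ∃ Γ : ℕ → Subgroup (FreeGroup (Fin d)),
      Γ 0 = ⊤ ∧
      (∀ n, Γ (n + 1) ≤ Γ n) ∧
      (∀ n, (Γ n).FiniteIndex) ∧
      (⨅ n, Γ n) = ⊥ ∧
      ∃ i : Fin d, ∀ n, 1 ≤ n → α < fixr (FreeGroup.of i) (Γ n) := by
  let a : Fin d := ⟨0, by omega⟩
  let b : Fin d := ⟨1, by omega⟩
  have hab : a ≠ b := by simp [a, b]
  have : Countable (FreeGroup (Fin d)) := FreeGroup.toWord_injective.countable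
  obtain ⟨w, hw⟩ := exists_surjective_nat (FreeGroup (Fin d))
  have hα : 0 < 1 - α := by linarith
  choose H hfin hmem hmov using fun n : ℕ =>
    exists_subgroup_movr_le a b hab (w n) ((1 - α) * (1 / 2) ^ (n + 1)) (by positivity)
  obtain ⟨Γ, hΓ0, hΓ⟩ : ∃ Γ : ℕ → Subgroup (FreeGroup (Fin d)),
      Γ 0 = ⊤ ∧ ∀ n, Γ (n + 1) = Γ n ⊓ H n :=
    ⟨fun n => Nat.rec ⊤ (fun n K => K ⊓ H n) n, rfl, fun _ => rfl⟩
  have hΓfin : ∀ n, (Γ n).FiniteIndex := by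
    intro n
    induction n with
    | zero => rw [hΓ0]; infer_instance
    | succ n ih => rw [hΓ]; have := hfin n; infer_instance
  have hΓmov : ∀ n, movr (FreeGroup.of a) (Γ n) ≤ (1 - α) * (1 - (1 / 2) ^ n) := by
    intro n
    induction n with
    | zero =>simp [hΓ0, movr_top]
    | succ n ih =>
      have := hfin n
      have := hΓfin n
      rw [hΓ]
      calc movr (FreeGroup.of a) (Γ n ⊓ H n) ≤ _ := movr_inf_le _ _ _
        _ ≤ _ := add_le_add ih (hmov n)
        _ = _ := by ring
  refine ⟨Γ, hΓ0, fun n => (hΓ n).trans_le inf_le_left, hΓfin, ?_, a, fun n _ => ?_⟩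
  · rw [eq_bot_iff]
    intro g hg
    obtain ⟨n, rfl⟩ := hw g
    have hg' := Subgroup.mem_iInf.1 hg (n + 1)
    rw [hΓ] at hg'
    exact Subgroup.mem_bot.2 (hmem n hg'.2)
  · have := hΓfin n
    rw [fixr_eq_one_sub_movr]
    have h1 := hΓmov n
    have h2 : 0 < (1 - α) * (1 / 2 : ℝ) ^ n := by positivity
    linarith
end

section
/- Let d ≥ 2, let Γ = F_d be the free group on a basis X = {a, b, c_1, …, c_{d-2}}, and let 0 < α < 1. Then there exists a descending sequence H_1 ≥ H_2 ≥ … of finite-index subgroups of Γ such that: (i) fixr(a, Γ/H_n) > α for all n ≥ 1, and (ii) the intersection of the normal cores ⋂_n Core_Γ(H_n) is trivial, i.e. for every w ∈ Γ with w ≠ 1 there exists n such that w acts nontrivially on the coset space Γ/H_n. -/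
/-- A partial injection of a finite set `S` extends to a permutation supported in `S`. -/
lemma exists_perm_extending (S : Finset ℕ) (D : Set ℕ) (f : ℕ → ℕ) (hD : D ⊆ S)
    (hf : Set.MapsTo f D S) (hinj : Set.InjOn f D) :
    ∃ σ : Equiv.Perm ℕ, (∀ j ∈ D, σ j = f j) ∧ ∀ j ∉ S, σ j = j := by
  classical
  have : Finite D := (S.finite_toSet.subset hD).to_subtype
  obtain ⟨τ, hτ⟩ := Equiv.Perm.exists_extending_pair (α := D) (β := S)
    (fun j => ⟨j, hD j.2⟩) (fun j => ⟨f j, hf j.2⟩)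
    (fun i j h => Subtype.ext (by simpa using h))
    (fun i j h => Subtype.ext (hinj i.2 j.2 (by simpa using h)))
  refine ⟨Equiv.Perm.ofSubtype τ, fun j hj => ?_, fun j hj => ?_⟩
  · rw [Equiv.Perm.ofSubtype_apply_of_mem τ (hD hj)]
    exact congrArg Subtype.val (hτ ⟨j, hj⟩)
  · exact Equiv.Perm.ofSubtype_apply_of_not_mem τ hj

/-- The permutation by which the generator `c` acts on the path labelled by the word `x`, where the
letter `x i` has to take `i + 1` to `i`. All edges labelled by `c` lie in `{0, …, m}`. -/
lemma exists_perm_of_letter {ι : Type*} (x : ℕ → ι × Bool)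
    (hx : ∀ i, (x i).1 = (x (i + 1)).1 → (x i).2 = (x (i + 1)).2) (n m : ℕ) (c : ι)
    (hm : ∀ i < n, (x i).1 = c → i < m) :
    ∃ σ : Equiv.Perm ℕ, (∀ i < n, x i = (c, true) → σ (i + 1) = i) ∧
      (∀ i < n, x i = (c, false) → σ i = i + 1) ∧ ∀ j, m < j → σ j = j := by
  classical
  let D : Set ℕ := {j | (∃ i < n, x i = (c, true) ∧ j = i + 1) ∨ (j < n ∧ x j = (c, false))}
  let f : ℕ → ℕ := fun j => if x j = (c, false) ∧ j < n then j + 1 else j - 1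
  -- By reducedness, no vertex is the source, or the target, of two edges labelled by `c`.
  have key : ∀ i, x i = (c, true) → x (i + 1) ≠ (c, false) := by
    intro i h1 h2
    have := hx i (by rw [h1, h2])
    simp [h1, h2] at this
  have key' : ∀ i, x i = (c, false) → x (i + 1) ≠ (c, true) := by
    intro i h1 h2
    have := hx i (by rw [h1, h2])
    simp [h1, h2] at this
  have hf1 : ∀ i, x i = (c, true) → f (i + 1) = i := by
    intro i h
    simp [f, key i h]
  have hf2 : ∀ i < n, x i = (c, false) → f i = i + 1 := by
    intro i hi h
    simp [f, h, hi]
  obtain ⟨σ, h1, h2⟩ := exists_perm_extending (Finset.range (m + 1)) D f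
    (by
      rintro j (⟨i, hi, h, rfl⟩ | ⟨hj, h⟩)
      · have := hm i hi (by rw [h])
        simp; omega
      · have := hm j hj (by rw [h])
        simp; omega)
    (by
      rintro j (⟨i, hi, h, rfl⟩ | ⟨hj, h⟩)
      · have := hm i hi (by rw [h])
        rw [hf1 i h]
        simp; omega
      · have := hm j hj (by rw [h])
        rw [hf2 j hj h]
        simp; omega)
    (by
      rintro j (⟨i, hi, h, rfl⟩ | ⟨hj, h⟩) j' (⟨i', hi', h', rfl⟩ | ⟨hj', h'⟩) e
      · rw [hf1 i h, hf1 i' h'] at e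
        omega
      · rw [hf1 i h, hf2 j' hj' h'] at e
        subst e
        exact absurd h (key' _ h')
      · rw [hf1 i' h', hf2 j hj h] at e
        subst e
        exact absurd h' (key' _ h)
      · rw [hf2 j hj h, hf2 j' hj' h'] at e
        omega)
  refine ⟨σ, fun i hi h => ?_, fun i hi h => ?_, fun j hj => h2 j (by simp; omega)⟩
  · rw [h1 _ (Or.inl ⟨i, hi, h, rfl⟩), hf1 i h]
  · rw [h1 _ (Or.inr ⟨hi, h⟩), hf2 i hi h]

lemma exists_perms_of_word {ι : Type*} (x : ℕ → ι × Bool)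
    (hx : ∀ i, (x i).1 = (x (i + 1)).1 → (x i).2 = (x (i + 1)).2) (b : ι) (l n : ℕ) (hln : l ≤ n)
    (hb : ∀ i, l ≤ i → (x i).1 = b) :
    ∃ σ : ι → Equiv.Perm ℕ,
      (∀ i < n, (cond (x i).2 (σ (x i).1) (σ (x i).1)⁻¹) (i + 1) = i) ∧
      (∀ c, c ≠ b → ∀ j, l < j → σ c j = j) ∧ ∀ c j, n < j → σ c j = j := by
  classical
  have := fun c => exists_perm_of_letter x hx n (if c = b then n else l) c (by
    intro i hi hc
    split_ifs with h
    · exact hi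
    · by_contra hl
      exact h (hc ▸ hb i (not_lt.mp hl)))
  choose σ h1 h2 h3 using this
  refine ⟨σ, fun i hi => ?_, fun c hc j hj => h3 c j (by simpa [hc] using hj),
    fun c j hj => h3 c j (by split_ifs <;> omega)⟩
  rcases hxi : x i with ⟨c, s⟩
  cases s
  · exact Equiv.Perm.inv_eq_iff_eq.mpr (h2 c i hi hxi).symm
  · simp [h1 c i hi hxi]

/-- A word acts by traversing its path: the last letter acts first. -/
lemma lift_mk_apply_path {ι : Type*} (σ : ι → Equiv.Perm ℕ) (L : List (ι × Bool)) (k : ℕ)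
    (h : ∀ (i : ℕ) (hi : i < L.length),
      (cond L[i].2 (σ L[i].1) (σ L[i].1)⁻¹) (k + i + 1) = k + i) :
    FreeGroup.lift σ (FreeGroup.mk L) (k + L.length) = k := by
  rw [FreeGroup.lift_mk]
  induction L generalizing k with
  | nil => simp
  | cons y L ih =>
    have h0 := h 0 (by simp)
    have := ih (k + 1) (fun i hi => by
      have := h (i + 1) (by simpa using hi)
      simp only [List.getElem_cons_succ] at this
      rw [show k + 1 + i = k + (i + 1) by ring]
      exact this)
    rw [List.map_cons, List.prod_cons, Equiv.Perm.mul_apply, List.length_cons,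
      show k + (L.length + 1) = k + 1 + L.length by ring, this]
    simpa using h0

/-- For `w ≠ 1` there are subgroups of every large index `n + 1` on whose cosets `w` acts
nontrivially while `a` moves at most `l + 1` cosets, with `l` depending on `w` only. -/
lemma exists_subgroup_of_ne_one {ι : Type*} (a b : ι) (hab : a ≠ b)
    (w : FreeGroup ι) (hw : w ≠ 1) :
    ∃ l : ℕ, ∀ n, l ≤ n → ∃ K : Subgroup (FreeGroup ι), K.index = n + 1 ∧
      (∃ x : FreeGroup ι ⧸ K, w • x ≠ x) ∧
      n - l ≤ Nat.card {x : FreeGroup ι ⧸ K | FreeGroup.of a • x = x} := by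
  classical
  set L := w.toWord with hL
  have hL0 : L ≠ [] := by simpa [hL, FreeGroup.toWord_eq_nil_iff] using hw
  have hpos : 0 < L.length := List.length_pos_iff.mpr hL0
  have hred : FreeGroup.IsReduced L := FreeGroup.isReduced_toWord
  refine ⟨L.length, fun n hn => ?_⟩
  -- The sign of the appended power of `b` is that of the last letter, to avoid cancellation.
  let x : ℕ → ι × Bool := fun i => if h : i < L.length then L[i] else (b, (L.getLast hL0).2)
  have hxL : ∀ (i : ℕ) (h : i < L.length), x i = L[i] := fun i h => by simp [x, h]
  have hxb : ∀ i, L.length ≤ i → x i = (b, (L.getLast hL0).2) := fun i h => by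
    simp [x, not_lt.mpr h]
  obtain ⟨σ, h1, h2, h3⟩ := exists_perms_of_word x (by
    intro i h
    rcases lt_trichotomy (i + 1) L.length with hi | hi | hi
    · rw [hxL i (by omega), hxL (i + 1) hi] at h ⊢
      exact List.isChain_iff_getElem.mp hred i hi h
    · rw [hxL i (by omega), hxb (i + 1) hi.ge, List.getLast_eq_getElem]
      simp [← hi]
    · rw [hxb i (by omega), hxb (i + 1) hi.le]) b L.length n hn
    (fun i hi => by rw [hxb i hi])
  let φ : FreeGroup ι →* Equiv.Perm ℕ := FreeGroup.lift σ
  let _ : MulAction (FreeGroup ι) ℕ := MulAction.compHom ℕ φ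
  have hsmul : ∀ (g : FreeGroup ι) (j : ℕ), g • j = φ g j := fun g j => rfl
  have hfix : ∀ (g : FreeGroup ι) (j : ℕ), n < j → g • j = j := by
    intro g j hj
    induction g using FreeGroup.induction_on with
    | C1 => simp
    | of c => simpa [hsmul, φ] using h3 c j hj
    | inv_of c h => rw [inv_smul_eq_iff, h]
    | mul g g' h h' => rw [mul_smul, h', h]
  have horb : MulAction.orbit (FreeGroup ι) (0 : ℕ) = Set.Iic n := by
    apply Set.Subset.antisymm
    · rintro _ ⟨g, rfl⟩
      by_contra hlt
      have hlt : n < g • 0 := not_le.mp hlt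
      have := hfix g⁻¹ _ hlt
      rw [inv_smul_smul] at this
      omega
    · intro j hj
      induction j with
      | zero => exact MulAction.mem_orbit_self _
      | succ j ih =>
        have hj' : j < n := hj
        rw [← MulAction.orbit_eq_iff.mpr (ih hj'.le), MulAction.mem_orbit_symm]
        refine ⟨FreeGroup.mk [x j], ?_⟩
        have := h1 j hj'
        simpa [hsmul, φ, FreeGroup.lift_mk] using this
  let e := MulAction.orbitEquivQuotientStabilizer (FreeGroup ι) (0 : ℕ)
  have he : ∀ (g : FreeGroup ι) (q : FreeGroup ι ⧸ MulAction.stabilizer (FreeGroup ι) (0 : ℕ)),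
      ((e.symm (g • q) : MulAction.orbit (FreeGroup ι) (0 : ℕ)) : ℕ) = g • (e.symm q : ℕ) := by
    intro g q
    induction q using QuotientGroup.induction_on with
    | H k => exact mul_smul g k (0 : ℕ)
  refine ⟨MulAction.stabilizer (FreeGroup ι) (0 : ℕ), ?_, ?_, ?_⟩
  · rw [MulAction.index_stabilizer, horb]
    simp
  · refine ⟨e ⟨L.length, by rw [horb]; exact hn⟩, fun h => ?_⟩
    have h' := he w (e ⟨L.length, by rw [horb]; exact hn⟩)
    rw [h, Equiv.symm_apply_apply] at h'
    have := lift_mk_apply_path σ L 0 (fun i hi => by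
      have := h1 i (by omega)
      rw [hxL i hi] at this
      simpa using this)
    rw [zero_add, hL, FreeGroup.mk_toWord] at this
    have h'' : L.length = 0 := h'.trans this
    omega
  · have hmem : ∀ j ∈ Set.Ioc L.length n, j ∈ MulAction.orbit (FreeGroup ι) (0 : ℕ) := by
      intro j hj
      rw [horb]
      exact hj.2
    have hfin : Finite (MulAction.orbit (FreeGroup ι) (0 : ℕ)) := by
      rw [horb]; exact (Set.finite_Iic n).to_subtype
    have : Finite (FreeGroup ι ⧸ MulAction.stabilizer (FreeGroup ι) (0 : ℕ)) :=
      Finite.of_equiv _ e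
    have hcard : n - L.length = Nat.card (Set.Ioc L.length n) := by simp
    rw [hcard]
    refine Nat.card_le_card_of_injective
      (fun j => ⟨e ⟨j, hmem j j.2⟩, ?_⟩) (fun i j h => ?_)
    · apply e.symm.injective
      apply Subtype.ext
      rw [he, Equiv.symm_apply_apply]
      simpa [hsmul, φ] using h2 a hab j j.2.1
    · simpa [Subtype.ext_iff] using h

/-- For coprime indices, `G ⧸ (H ⊓ K) ≃ G ⧸ H × G ⧸ K` equivariantly. -/
lemma fixr_inf_of_coprime {G : Type*} [Group G] (g : G) (H K : Subgroup G) [H.FiniteIndex]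
    [K.FiniteIndex] (h : H.index.Coprime K.index) :
    fixr g (H ⊓ K) = fixr g H * fixr g K := by
  have hidx : (H ⊓ K).index = H.index * K.index := by
    apply le_antisymm Subgroup.index_inf_le
    exact Nat.le_of_dvd (Nat.pos_of_ne_zero Subgroup.FiniteIndex.index_ne_zero)
      (h.mul_dvd_of_dvd_of_dvd (Subgroup.index_dvd_of_le inf_le_left)
        (Subgroup.index_dvd_of_le inf_le_right))
  let f : G ⧸ (H ⊓ K) → (G ⧸ H) × (G ⧸ K) := fun q =>
    (Subgroup.quotientMapOfLE inf_le_left q, Subgroup.quotientMapOfLE inf_le_right q)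
  have hf : ∀ q, f (g • q) = (g • (f q).1, g • (f q).2) := by
    intro q
    induction q using QuotientGroup.induction_on with
    | H k => rfl
  have hinj : Function.Injective f := by
    intro p q
    induction p using QuotientGroup.induction_on
    induction q using QuotientGroup.induction_on
    intro hpq
    have h1 := congrArg Prod.fst hpq
    have h2 := congrArg Prod.snd hpq
    simp only [f, Subgroup.quotientMapOfLE_apply_mk] at h1 h2
    rw [QuotientGroup.eq] at h1 h2 ⊢
    exact ⟨h1, h2⟩
  have hbij : Function.Bijective f := by
    rw [Nat.bijective_iff_injective_and_card]
    exact ⟨hinj, by rw [Nat.card_prod]; exact hidx⟩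
  let e := Equiv.ofBijective f hbij
  have hcard : Nat.card {x : G ⧸ (H ⊓ K) | g • x = x} =
      Nat.card {x : G ⧸ H | g • x = x} * Nat.card {x : G ⧸ K | g • x = x} := by
    rw [← Nat.card_prod, ← Nat.card_congr (Equiv.Set.prod _ _)]
    refine Nat.card_congr (e.subtypeEquiv fun q => ?_)
    change g • q = q ↔ g • (f q).1 = (f q).1 ∧ g • (f q).2 = (f q).2
    rw [← hinj.eq_iff, hf, Prod.ext_iff]
  unfold fixr
  rw [hidx, hcard]
  push_cast
  ring

/-- One step of the chain: intersecting with a `K` whose index is coprime to that of `H` and large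
enough for `fixr a K` to exceed `α / fixr a H`. -/
lemma exists_refinement {ι : Type*} (a b : ι) (hab : a ≠ b) (α : ℝ) (hα0 : 0 < α)
    (H : Subgroup (FreeGroup ι)) (hH : H.FiniteIndex) (hα : α < fixr (FreeGroup.of a) H)
    (w : FreeGroup ι) :
    ∃ H' : Subgroup (FreeGroup ι), H'.FiniteIndex ∧ α < fixr (FreeGroup.of a) H' ∧ H' ≤ H ∧
      (w ≠ 1 → ∃ x : FreeGroup ι ⧸ H', w • x ≠ x) := by
  by_cases hw : w = 1
  · exact ⟨H, hH, hα, le_rfl, fun h => absurd hw h⟩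
  obtain ⟨l, hl⟩ := exists_subgroup_of_ne_one a b hab w hw
  have hr0 : 0 < fixr (FreeGroup.of a) H := hα0.trans hα
  set r := fixr (FreeGroup.of a) H with hr
  have hi : 1 ≤ H.index := Nat.pos_of_ne_zero hH.index_ne_zero
  obtain ⟨t, ht⟩ := exists_nat_gt ((l + 1) * r / (r - α))
  -- The index `H.index * (l + t) + 1` of `K` is coprime to `H.index`.
  have hn : l + t ≤ H.index * (l + t) := Nat.le_mul_of_pos_left _ hi
  obtain ⟨K, hK1, ⟨x, hx⟩, hK3⟩ := hl (H.index * (l + t)) (by omega)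
  set n := H.index * (l + t) with hndef
  have hKf : K.FiniteIndex := ⟨by omega⟩
  have hcop : H.index.Coprime K.index := by
    rw [hK1, hndef]
    simp
  refine ⟨H ⊓ K, inferInstance, ?_, inf_le_left, fun _ => ?_⟩
  · rw [fixr_inf_of_coprime _ H K hcop, ← hr]
    have hfix : ((n : ℝ) - l) / (n + 1) ≤ fixr (FreeGroup.of a) K := by
      unfold fixr
      rw [hK1]
      push_cast
      gcongr
      rw [← Nat.cast_sub (by omega)]
      exact_mod_cast hK3
    refine lt_of_lt_of_le ?_ (mul_le_mul_of_nonneg_left hfix hr0.le)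
    have hnt : (l : ℝ) + t ≤ n := by exact_mod_cast hn
    rw [div_lt_iff₀ (by linarith)] at ht
    rw [← mul_div_assoc, lt_div_iff₀ (by positivity)]
    have : (t : ℝ) * (r - α) ≤ (n + 1) * (r - α) :=
      mul_le_mul_of_nonneg_right (by linarith [(Nat.cast_nonneg l : (0 : ℝ) ≤ l)]) (by linarith)
    nlinarith
  · induction x using QuotientGroup.induction_on with
    | H k =>
      refine ⟨(k : FreeGroup ι ⧸ (H ⊓ K)), fun h => hx ?_⟩
      exact congrArg (Subgroup.quotientMapOfLE (inf_le_right : H ⊓ K ≤ K)) h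

/-- For `d ≥ 2`, the free group on the `d`-element basis indexed by `Fin d` (with `a` the
first basis element) and `0 < α < 1`, there is a descending sequence of finite-index
subgroups `H_n` such that the fixed-point ratio of `a` on every `Γ ⧸ H_n` exceeds `α` and
the intersection of the normal cores of the `H_n` is trivial (equivalently, every
nontrivial `w` acts nontrivially on some coset space `Γ ⧸ H_n`). -/
theorem free_group_faithful_chain_with_large_fixed_point_ratio (d : ℕ) (hd : 2 ≤ d)
    (α : ℝ) (hα0 : 0 < α) (hα1 : α < 1) :
    ∃ H : ℕ → Subgroup (FreeGroup (Fin d)),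
      (∀ n, H (n + 1) ≤ H n) ∧
      (∀ n, (H n).FiniteIndex) ∧
      (∀ n, α < fixr (FreeGroup.of (⟨0, by omega⟩ : Fin d)) (H n)) ∧
      (⨅ n, (H n).normalCore) = ⊥ ∧
      (∀ w : FreeGroup (Fin d), w ≠ 1 →
        ∃ n, ∃ x : FreeGroup (Fin d) ⧸ H n, w • x ≠ x) := by
  have : Countable (FreeGroup (Fin d)) := FreeGroup.toWord_injective.countable
  set a : Fin d := ⟨0, by omega⟩
  have hab : a ≠ (⟨1, by omega⟩ : Fin d) := by simp [a]
  obtain ⟨e, he⟩ := exists_surjective_nat (FreeGroup (Fin d))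
  let T := {H : Subgroup (FreeGroup (Fin d)) // H.FiniteIndex ∧ α < fixr (FreeGroup.of a) H}
  choose F hF1 hF2 hF3 hF4 using fun (H : T) w =>
    exists_refinement a _ hab α hα0 H.1 H.2.1 H.2.2 w
  have htop : α < fixr (FreeGroup.of a) (⊤ : Subgroup (FreeGroup (Fin d))) := by
    have : {x : FreeGroup (Fin d) ⧸ (⊤ : Subgroup (FreeGroup (Fin d))) |
        FreeGroup.of a • x = x} = Set.univ :=
      Set.eq_univ_of_forall fun x => QuotientGroup.subsingleton_quotient_top.elim _ _
    rw [fixr, this, Nat.card_coe_set_eq, Set.ncard_univ]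
    simpa using hα1
  let S : ℕ → T := fun n => Nat.rec (⟨⊤, inferInstance, htop⟩ : T)
    (fun k H => ⟨F H (e k), hF1 H (e k), hF2 H (e k)⟩) n
  have hmove : ∀ w : FreeGroup (Fin d), w ≠ 1 →
      ∃ n, ∃ x : FreeGroup (Fin d) ⧸ (S n).1, w • x ≠ x := by
    intro w hw
    obtain ⟨k, rfl⟩ := he w
    exact ⟨k + 1, hF4 (S k) (e k) hw⟩
  refine ⟨fun n => (S n).1, fun n => hF3 (S n) (e n), fun n => (S n).2.1, fun n => (S n).2.2,
    ?_, hmove⟩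
  rw [eq_bot_iff]
  intro w hw
  by_contra hne
  obtain ⟨n, x, hx⟩ := hmove w (by simpa using hne)
  have := (Subgroup.mem_iInf.mp hw) n
  rw [Subgroup.normalCore_eq_ker, MonoidHom.mem_ker] at this
  exact hx (by simpa using congrArg (fun p => p x) this)
end

section
/- Let X be a finite set containing two distinct elements a and b, let F_X be the free group on X, and let w ∈ F_X be a nontrivial reduced word of length k ≥ 1 whose first letter is a (i.e. w = a·u_2⋯u_k in reduced form). Then for every prime p there exist a finite set V with |V| = p + k, a point v_0 ∈ V, and a group homomorphism Φ : F_X → Sym(V) such that: (i) Φ(w)(v_0) ≠ v_0; (ii) Φ(a) fixes at least p − 1 points of V; and (iii) the orbit of v_0 under the cyclic group ⟨Φ(b)⟩ has exactly p elements, on which Φ(b) acts as a p-cycle. -/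
/-!
Write `w = u₁ ⋯ u_k` with `u₁ = a`, and take `V = {0, …, p + k - 1}`. The points `0, …, p - 1` carry
a `b`-labeled cycle, and the points `x_i = p - 1 + i` (`0 ≤ i ≤ k`) carry a path in which `u_i` sends
`x_i` to `x_{i-1}`; the two meet only at `v₀ = x₀ = p - 1`. Moreover every label other than `b` gets
a loop at each of `0, …, p - 2`. Because `w` is reduced and its first letter is `a ≠ b`,
each label defines a partial injection of `V` (`GraphEdge.right_unique`, `GraphEdge.left_unique`),
and a partial injection of a finite set extends to a permutation (`exists_perm_of_biUnique`).

Permutations act on the left, so `w` sends the far end `x_k` of the path to `x₀ = v₀`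
(`lift_mk_apply_path`). As `x_k ≠ v₀`, injectivity shows that `w` moves `v₀`.
-/

/-- A partial injection of a finite type, given as a relation, extends to a permutation. -/
theorem exists_perm_of_biUnique {V : Type*} [Fintype V] [DecidableEq V] (R : V → V → Prop)
    (hr : ∀ s t t', R s t → R s t' → t = t') (hl : ∀ s s' t, R s t → R s' t → s = s') :
    ∃ σ : Equiv.Perm V, ∀ s t, R s t → σ s = t := by
  classical
  let f : V → V := fun s => if h : ∃ t, R s t then h.choose else s
  have hf : ∀ s t, R s t → f s = t := fun s t h => by
    have h' : ∃ t, R s t := ⟨t, h⟩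
    simp only [f, dif_pos h']
    exact hr _ _ _ h'.choose_spec h
  obtain ⟨g, hg⟩ := Finset.exists_equiv_extend_of_card_eq (α := V) (t := (Finset.univ : Finset V))
    (by simp) (s := Finset.univ.filter fun s => ∃ t, R s t) (f := f) (by simp) (by
      intro s hs s' hs' h
      simp only [Finset.coe_filter, Finset.mem_univ, true_and, Set.mem_ofPred_eq] at hs hs'
      obtain ⟨t, ht⟩ := hs
      obtain ⟨t', ht'⟩ := hs'
      rw [hf _ _ ht, hf _ _ ht'] at h
      subst h
      exact hl _ _ _ ht ht')
  refine ⟨g.trans (Equiv.subtypeUnivEquiv (by simp)), fun s t h => ?_⟩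
  have := hg s (by simpa using ⟨t, h⟩)
  simpa [Equiv.subtypeUnivEquiv, hf s t h] using this

/-- The edges with label `y` from `s` to `t` in the graph made of a `b`-cycle on `0, …, p - 1`, a
path spelling `L` on `p - 1, …, p - 1 + L.length` and, for `y ≠ b`, loops at `0, …, p - 2`.
The `i`-th letter of `L` joins the vertices `p + i` and `p - 1 + i` (`i` counted from `0`), pointing
towards the cycle if the letter is positive. -/
def GraphEdge {X : Type*} (b : X) (p : ℕ) (L : List (X × Bool)) (y : X) (s t : ℕ) : Prop :=
  (∃ i, L[i]? = some (y, true) ∧ s = p + i ∧ t + 1 = p + i) ∨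
  (∃ i, L[i]? = some (y, false) ∧ s + 1 = p + i ∧ t = p + i) ∨
  (y = b ∧ s < p ∧ t = if s + 1 = p then 0 else s + 1) ∨
  (y ≠ b ∧ s + 1 < p ∧ t = s)

section
variable {X : Type*} {a b : X} {p : ℕ} {L : List (X × Bool)} {y : X}

/-- In a reduced word a letter is not followed by its inverse. -/
theorem reduced_getElem? (hL : FreeGroup.IsReduced L) (i : ℕ) (c d : Bool)
    (h1 : L[i]? = some (y, c)) (h2 : L[i + 1]? = some (y, d)) : c = d := by
  rw [FreeGroup.IsReduced, List.isChain_iff_getElem] at hL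
  obtain ⟨h1', h1⟩ := List.getElem?_eq_some_iff.1 h1
  obtain ⟨h2', h2⟩ := List.getElem?_eq_some_iff.1 h2
  have := hL i h2'
  rw [h1, h2] at this
  exact this rfl

theorem GraphEdge.right_unique (hL : FreeGroup.IsReduced L)
    (h0 : L[0]? = some (a, true)) {s t t' : ℕ}
    (h : GraphEdge b p L y s t) (h' : GraphEdge b p L y s t') : t = t' := by
  have key := reduced_getElem? (y := y) hL
  rcases h with ⟨i, hi, h1, h2⟩ | ⟨i, hi, h1, h2⟩ | ⟨hy, h1, h2⟩ | ⟨hy, h1, h2⟩ <;>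
  rcases h' with ⟨j, hj, h1', h2'⟩ | ⟨j, hj, h1', h2'⟩ | ⟨hy', h1', h2'⟩ | ⟨hy', h1', h2'⟩ <;>
  try omega
  · obtain rfl : j = i + 1 := by omega
    exact absurd (key i _ _ hi hj) (by simp)
  · obtain rfl : i = j + 1 := by omega
    exact absurd (key j _ _ hj hi) (by simp)
  · obtain rfl : i = 0 := by omega
    simp [h0] at hi
  · obtain rfl : j = 0 := by omega
    simp [h0] at hj
  all_goals grind

theorem GraphEdge.left_unique (hab : a ≠ b) (hp : 0 < p) (hL : FreeGroup.IsReduced L)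
    (h0 : L[0]? = some (a, true)) {s s' t : ℕ}
    (h : GraphEdge b p L y s t) (h' : GraphEdge b p L y s' t) : s = s' := by
  have key := reduced_getElem? (y := y) hL
  rcases h with ⟨i, hi, h1, h2⟩ | ⟨i, hi, h1, h2⟩ | ⟨hy, h1, h2⟩ | ⟨hy, h1, h2⟩ <;>
  rcases h' with ⟨j, hj, h1', h2'⟩ | ⟨j, hj, h1', h2'⟩ | ⟨hy', h1', h2'⟩ | ⟨hy', h1', h2'⟩ <;>
  try omega
  · obtain rfl : i = j + 1 := by omega
    exact absurd (key j _ _ hj hi) (by simp)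
  · -- The path reaches the cycle only at `p - 1`, by an edge labeled `a ≠ b`.
    obtain rfl : i = 0 := by grind
    grind
  · obtain rfl : j = i + 1 := by omega
    exact absurd (key i _ _ hi hj) (by simp)
  all_goals grind

end

/-- Under the left action, a word carries the end of a path spelling it back to its start. -/
theorem lift_mk_apply_path_s7 {X V : Type*} (φ : X → Equiv.Perm V) (L : List (X × Bool)) (f : ℕ → V)
    (ht : ∀ i y, L[i]? = some (y, true) → φ y (f (i + 1)) = f i)
    (hf : ∀ i y, L[i]? = some (y, false) → φ y (f i) = f (i + 1)) :
    FreeGroup.lift φ (FreeGroup.mk L) (f L.length) = f 0 := by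
  induction L generalizing f with
  | nil => simp [FreeGroup.lift_mk]
  | cons u L ih =>
    have := ih (fun i => f (i + 1)) (fun i y h => ht (i + 1) y (by simpa using h))
      (fun i y h => hf (i + 1) y (by simpa using h))
    rw [FreeGroup.lift_mk] at this ⊢
    simp only [List.map_cons, List.prod_cons, Equiv.Perm.mul_apply, List.length_cons]
    rw [this]
    obtain ⟨y, c⟩ := u
    cases c
    · simp [Equiv.symm_apply_eq, hf 0 y]
    · simp [ht 0 y]

/-- The paper's construction of the labeled graph `G_i`.  If `w` is a nontrivial reduced
word in the free group on a finite set `X` whose first letter is the generator `a`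
(with `b ∈ X` a different generator), then for every prime `p` there are a finite set `V`
of cardinality `p + |w|`, a point `v₀ ∈ V` and a homomorphism `Φ : F_X → Sym(V)` such
that `Φ(w)` moves `v₀`, `Φ(a)` fixes at least `p - 1` points of `V`, and the orbit of
`v₀` under the cyclic group generated by `Φ(b)` has exactly `p` elements (so `Φ(b)` acts
on it as a `p`-cycle). -/
theorem exists_graph_action_detecting_word {X : Type*} [Fintype X] [DecidableEq X]
    (a b : X) (hab : a ≠ b) (w : FreeGroup X) (hw : w ≠ 1)
    (hhead : w.toWord.head? = some (a, true))
    (p : ℕ) (hp : p.Prime) :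
    ∃ (V : Type) (_ : Fintype V) (v0 : V) (Φ : FreeGroup X →* Equiv.Perm V),
      Nat.card V = p + w.toWord.length ∧
      Φ w v0 ≠ v0 ∧
      p - 1 ≤ Nat.card {v : V | Φ (FreeGroup.of a) v = v} ∧
      Nat.card {v : V | ∃ n : ℤ, ((Φ (FreeGroup.of b)) ^ n) v0 = v} = p := by
  have hp0 : 0 < p := hp.pos
  have hL : FreeGroup.IsReduced w.toWord := FreeGroup.isReduced_toWord
  have hmk : FreeGroup.mk w.toWord = w := FreeGroup.mk_toWord
  generalize w.toWord = L at hhead hL hmk ⊢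
  have h0 : L[0]? = some (a, true) := by rwa [← List.head?_eq_getElem?]
  have hk : 0 < L.length := by
    by_contra h
    simp_all
  have hex : ∀ y : X, ∃ σ : Equiv.Perm (Fin (p + L.length)),
      ∀ s t : Fin (p + L.length), GraphEdge b p L y s t → σ s = t := fun y =>
    exists_perm_of_biUnique (fun s t : Fin (p + L.length) => GraphEdge b p L y s t)
      (fun _ _ _ h h' => Fin.ext (GraphEdge.right_unique hL h0 h h'))
      (fun _ _ _ h h' => Fin.ext (GraphEdge.left_unique hab hp0 hL h0 h h'))
  choose φ hφ using hex
  refine ⟨Fin (p + L.length), inferInstance, ⟨p - 1, by omega⟩, FreeGroup.lift φ, by simp, ?_, ?_, ?_⟩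
  · -- The vertex `x_i`; the reduction modulo `p + L.length` only makes it defined for all `i`.
    let f : ℕ → Fin (p + L.length) := fun i => ⟨(p - 1 + i) % (p + L.length), Nat.mod_lt _ (by omega)⟩
    have hfv : ∀ i ≤ L.length, (f i : ℕ) = p - 1 + i := fun i hi => Nat.mod_eq_of_lt (by omega)
    have hpath := lift_mk_apply_path_s7 φ L f
      (fun i y h => by
        have hi : i < L.length := (List.getElem?_eq_some_iff.1 h).1
        refine hφ y _ _ (Or.inl ⟨i, h, ?_, ?_⟩)
        · rw [hfv _ hi]; omega
        · rw [hfv _ hi.le]; omega)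
      (fun i y h => by
        have hi : i < L.length := (List.getElem?_eq_some_iff.1 h).1
        refine hφ y _ _ (Or.inr (Or.inl ⟨i, h, ?_, ?_⟩))
        · rw [hfv _ hi.le]; omega
        · rw [hfv _ hi]; omega)
    have hv0 : (⟨p - 1, by omega⟩ : Fin (p + L.length)) = f 0 :=
      Fin.ext (by rw [hfv 0 (by omega)]; simp)
    rw [hv0, ← hmk]
    intro h
    have := congrArg Fin.val ((FreeGroup.lift φ (FreeGroup.mk L)).injective (hpath.trans h.symm))
    rw [hfv _ le_rfl, hfv _ (by omega)] at this
    omega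
  · let g : Fin (p - 1) → {v | FreeGroup.lift φ (FreeGroup.of a) v = v} := fun i =>
      ⟨⟨i, by omega⟩, by
        simp only [Set.mem_ofPred_eq, FreeGroup.lift_apply_of]
        exact hφ a _ _ (Or.inr (Or.inr (Or.inr ⟨hab, by simp; omega, rfl⟩)))⟩
    have := Nat.card_le_card_of_injective g (fun i j h => by simpa [g, Fin.ext_iff] using h)
    simpa using this
  · have hstep : ∀ s : Fin (p + L.length), (s : ℕ) < p →
        (φ b s : ℕ) = if (s : ℕ) + 1 = p then 0 else (s : ℕ) + 1 := fun s hs => by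
      rw [hφ b s ⟨if (s : ℕ) + 1 = p then 0 else (s : ℕ) + 1, by split_ifs <;> omega⟩
        (Or.inr (Or.inr (Or.inl ⟨rfl, hs, rfl⟩)))]
    have hpow : ∀ n : ℕ, ((φ b ^ n) ⟨p - 1, by omega⟩ : Fin (p + L.length)).val = (p - 1 + n) % p := by
      intro n
      induction n with
      | zero => simp [Nat.mod_eq_of_lt, hp0]
      | succ n ih =>
        have hlt := Nat.mod_lt (p - 1 + n) hp0
        rw [pow_succ', Equiv.Perm.mul_apply, hstep _ (ih ▸ hlt), ih, ← add_assoc,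
          Nat.add_mod_eq_ite (m := p - 1 + n) (n := 1), Nat.mod_eq_of_lt hp.one_lt]
        split_ifs <;> omega
    have hset : {v | ∃ n : ℤ, (FreeGroup.lift φ (FreeGroup.of b) ^ n) ⟨p - 1, by omega⟩ = v} =
        Set.range (Fin.castAdd L.length : Fin p → Fin (p + L.length)) := by
      ext v
      simp only [Set.mem_ofPred_eq, FreeGroup.lift_apply_of, Set.mem_range]
      constructor
      · intro h
        -- A permutation of a finite set has finite order, so natural powers suffice.
        obtain ⟨n, -, hn⟩ := Equiv.Perm.SameCycle.exists_pow_eq' (f := φ b) h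
        refine ⟨⟨v, ?_⟩, rfl⟩
        rw [← hn, hpow]
        exact Nat.mod_lt _ hp0
      · rintro ⟨i, rfl⟩
        refine ⟨((i : ℕ) + 1 : ℕ), Fin.ext ?_⟩
        rw [zpow_natCast, hpow, show p - 1 + ((i : ℕ) + 1) = i + p by omega]
        simp [Nat.mod_eq_of_lt]
    rw [hset, Nat.card_range_of_injective (Fin.castAdd_injective _ _)]
    simp
end
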